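/- Let G be a finite group and d ≥ 2. Then the tensor rank of the group tensor T_G^d over the complex numbers ℂ satisfies rank_ℂ(T_G^d) ≤ |G|^{d/2}. -/

import Mathlib

/-- The tensor rank of an order-`d` cube tensor `T : I^d → F`:
the least `r` such that `T` is the sum of `r` simple tensors. -/
noncomputable def tensorRank (F : Type*) [Field F] {d : ℕ} {I : Type*}
    (T : (Fin d → I) → F) : ℕ :=
  sInf {r : ℕ | ∃ v : Fin r → Fin d → I → F, ∀ i, T i = ∑ l, ∏ j, v l j (i j)}

/-- The order-`d` group tensor of a group `G` over `F`:
`T(g₁, …, g_d) = 1` if `g₁ ⋯ g_d = 1` and `0` otherwise. -/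
noncomputable def groupTensor (F : Type*) [Field F] (G : Type*) [Group G] [DecidableEq G]
    (d : ℕ) : (Fin d → G) → F :=
  fun g => if (List.ofFn g).prod = 1 then 1 else 0

/-!
A linear functional on a split semisimple algebra `∏ᵢ Mat(nᵢ)` is a sum of functionals on the
blocks, each of the form `M ↦ trace (C * M)`; evaluate it on a product of `d` elements.
Expanding the trace of a product of `d` matrices over closed walks of length `d` writes the `i`-th
block as a sum of `nᵢ ^ d` simple tensors. The group tensor is the case of the coefficient of `1`
in the group algebra, which splits by Maschke and Wedderburn–Artin with `∑ nᵢ² = |G|`, so its rank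
is at most `∑ nᵢ ^ d ≤ (∑ nᵢ²) ^ (d / 2) = |G| ^ (d / 2)`.
-/

open Matrix

section PowerSums

theorem sum_rpow_le_rpow_sum {ι : Type*} (s : Finset ι) {f : ι → ℝ} {p : ℝ} (hp : 1 ≤ p)
    (hf : ∀ i ∈ s, 0 ≤ f i) : ∑ i ∈ s, f i ^ p ≤ (∑ i ∈ s, f i) ^ p := by
  induction s using Finset.cons_induction with
  | empty => simp [Real.zero_rpow (by linarith : p ≠ 0)]
  | cons a s ha ih =>
    rw [Finset.forall_mem_cons] at hf
    rw [Finset.sum_cons, Finset.sum_cons]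
    calc f a ^ p + ∑ i ∈ s, f i ^ p ≤ f a ^ p + (∑ i ∈ s, f i) ^ p := by gcongr; exact ih hf.2
      _ ≤ (f a + ∑ i ∈ s, f i) ^ p :=
        Real.add_rpow_le_rpow_add hf.1 (Finset.sum_nonneg hf.2) hp

theorem sum_pow_le_sum_sq_rpow {ι : Type*} (s : Finset ι) {f : ι → ℝ} {d : ℕ} (hd : 2 ≤ d)
    (hf : ∀ i ∈ s, 0 ≤ f i) : ∑ i ∈ s, f i ^ d ≤ (∑ i ∈ s, f i ^ 2) ^ ((d : ℝ) / 2) := by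
  have one_le_half : (1 : ℝ) ≤ (d : ℝ) / 2 := by
    rw [one_le_div two_pos]
    exact_mod_cast hd
  have pow_eq (i) (hi : i ∈ s) : f i ^ d = (f i ^ 2) ^ ((d : ℝ) / 2) := by
    rw [← Real.rpow_natCast_mul (hf i hi), Nat.cast_ofNat, mul_div_cancel₀ _ two_ne_zero,
      Real.rpow_natCast]
  rw [Finset.sum_congr rfl pow_eq]
  exact sum_rpow_le_rpow_sum s one_le_half fun i _ => sq_nonneg (f i)

end PowerSums

section MatrixProducts

variable {n R : Type*} [Fintype n] [CommSemiring R]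

theorem prod_ofFn_mulVec_apply [DecidableEq n] {m : ℕ} (A : Fin m → Matrix n n R) (w : n → R)
    (a : n) :
    ((List.ofFn A).prod *ᵥ w) a = ∑ f : Fin m → n,
      (∏ j, A j ((Fin.cons a f : Fin (m + 1) → n) j.castSucc) (f j)) *
        w ((Fin.cons a f : Fin (m + 1) → n) (Fin.last m)) := by
  induction m generalizing a with
  | zero => simp
  | succ m ih =>
    rw [← (Fin.consEquiv fun _ : Fin (m + 1) => n).sum_comp, Fintype.sum_prod_type,
      List.ofFn_succ, List.prod_cons, ← mulVec_mulVec, mulVec_eq_sum]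
    simp [ih, Fin.consEquiv, Fin.prod_univ_succ, Finset.mul_sum, mul_assoc]

-- The addition `j + 1` in `Fin (m + 1)` is cyclic, so the sum is over closed walks.
theorem trace_prod_ofFn [DecidableEq n] {m : ℕ} (A : Fin (m + 1) → Matrix n n R) :
    trace (List.ofFn A).prod = ∑ f : Fin (m + 1) → n, ∏ j, A j (f j) (f (j + 1)) := by
  rw [List.ofFn_succ', List.prod_concat, ← (Fin.consEquiv fun _ : Fin (m + 1) => n).sum_comp,
    Fintype.sum_prod_type, trace]
  refine Finset.sum_congr rfl fun a _ => ?_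
  change ((List.ofFn fun j : Fin m => A j.castSucc).prod *ᵥ fun b => A (Fin.last m) b a) a = _
  rw [prod_ofFn_mulVec_apply]
  simp [Fin.consEquiv, Fin.prod_univ_castSucc]

theorem exists_eq_trace_mul (φ : Matrix n n R →ₗ[R] R) :
    ∃ C : Matrix n n R, ∀ M, φ M = trace (C * M) := by
  classical
  refine ⟨of fun b a => φ (single a b 1), fun M => ?_⟩
  have φ_single (a b : n) : φ (single a b (M a b)) = φ (single a b 1) * M a b := by
    rw [mul_comm, ← smul_eq_mul, ← map_smul, smul_single, smul_eq_mul, mul_one]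
  conv_lhs => rw [matrix_eq_sum_single M]
  simp only [map_sum, φ_single, trace, diag_apply, mul_apply, of_apply]
  exact Finset.sum_comm

end MatrixProducts

section SimpleTensors

variable {R I : Type*} [CommSemiring R] {d m : ℕ}

/-- `T` is a sum of `r` simple tensors. This expresses the bound `rank T ≤ r` in a
form that is additive in `T`, whereas `tensorRank` is `0` by convention for a tensor that has no
decomposition into simple tensors. -/
def IsSumOfSimpleTensors (T : (Fin d → I) → R) (r : ℕ) : Prop :=
  ∃ v : Fin r → Fin d → I → R, ∀ i, T i = ∑ l, ∏ j, v l j (i j)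

theorem IsSumOfSimpleTensors.tensorRank_le {F : Type*} [Field F] {T : (Fin d → I) → F} {r : ℕ}
    (hT : IsSumOfSimpleTensors T r) : tensorRank F T ≤ r :=
  Nat.sInf_le hT

theorem isSumOfSimpleTensors_sum_prod {X : Type*} [Fintype X] (v : X → Fin d → I → R) :
    IsSumOfSimpleTensors (fun i => ∑ x, ∏ j, v x j (i j)) (Fintype.card X) :=
  ⟨fun l => v ((Fintype.equivFin X).symm l), fun i =>
    ((Fintype.equivFin X).symm.sum_comp fun x => ∏ j, v x j (i j)).symm⟩

theorem IsSumOfSimpleTensors.sum {ι : Type*} [Fintype ι] {T : ι → (Fin d → I) → R} {r : ι → ℕ}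
    (hT : ∀ k, IsSumOfSimpleTensors (T k) (r k)) :
    IsSumOfSimpleTensors (fun i => ∑ k, T k i) (∑ k, r k) := by
  choose v hv using hT
  simpa [Fintype.sum_sigma, hv] using
    isSumOfSimpleTensors_sum_prod fun x : Σ k, Fin (r k) => v x.1 x.2

theorem isSumOfSimpleTensors_trace_prod {n : Type*} [Fintype n] [DecidableEq n]
    (A : Fin (m + 1) → I → Matrix n n R) :
    IsSumOfSimpleTensors (fun i => trace (List.ofFn fun j => A j (i j)).prod)
      (Fintype.card n ^ (m + 1)) := by
  simpa only [trace_prod_ofFn, Fintype.card_fun, Fintype.card_fin] using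
    isSumOfSimpleTensors_sum_prod fun (f : Fin (m + 1) → n) j x => A j x (f j) (f (j + 1))

theorem isSumOfSimpleTensors_linearMap_prod_matrix {n : Type*} [Fintype n] [DecidableEq n]
    (φ : Matrix n n R →ₗ[R] R) (A : Fin (m + 1) → I → Matrix n n R) :
    IsSumOfSimpleTensors (fun i => φ (List.ofFn fun j => A j (i j)).prod)
      (Fintype.card n ^ (m + 1)) := by
  obtain ⟨C, hC⟩ := exists_eq_trace_mul φ
  simpa [hC, mul_assoc] using
    isSumOfSimpleTensors_trace_prod (Fin.cons (fun x => C * A 0 x) fun j => A j.succ)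

theorem isSumOfSimpleTensors_linearMap_prod_pi_matrix {ι : Type*} [Fintype ι] {n : ι → Type*}
    [∀ k, Fintype (n k)] [∀ k, DecidableEq (n k)]
    (φ : (∀ k, Matrix (n k) (n k) R) →ₗ[R] R)
    (A : Fin (m + 1) → I → ∀ k, Matrix (n k) (n k) R) :
    IsSumOfSimpleTensors (fun i => φ (List.ofFn fun j => A j (i j)).prod)
      (∑ k, Fintype.card (n k) ^ (m + 1)) := by
  classical
  have φ_eq_sum (x : ∀ k, Matrix (n k) (n k) R) :
      φ x = ∑ k, (φ ∘ₗ LinearMap.single R _ k) (x k) := by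
    conv_lhs => rw [← Finset.univ_sum_single x, map_sum]
    rfl
  simp only [φ_eq_sum, Pi.list_prod_apply, List.map_ofFn, Function.comp_def]
  exact IsSumOfSimpleTensors.sum fun k =>
    isSumOfSimpleTensors_linearMap_prod_matrix
      (φ ∘ₗ LinearMap.single R (fun k => Matrix (n k) (n k) R) k) fun j x => A j x k

end SimpleTensors

section GroupAlgebra

variable {F G ι : Type*} [Field F] [Group G] {n : ι → Type*} [∀ k, Fintype (n k)]
  [∀ k, DecidableEq (n k)]

theorem groupTensor_eq_coord_prod [DecidableEq G] {d : ℕ} (g : Fin d → G) :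
    groupTensor F G d g =
      (MonoidAlgebra.basis G F).coord 1 (List.ofFn fun j => MonoidAlgebra.of F G (g j)).prod := by
  have prod_of : (List.ofFn fun j => MonoidAlgebra.of F G (g j)).prod =
      MonoidAlgebra.of F G (List.ofFn g).prod := by
    rw [map_list_prod, List.map_ofFn, Function.comp_def]
  rw [prod_of, Module.Basis.coord_apply]
  change _ = (MonoidAlgebra.single (List.ofFn g).prod (1 : F)).coeff 1
  simp [groupTensor, Finsupp.single_apply]

theorem card_eq_sum_card_sq_of_algEquiv [Fintype G] [Fintype ι]
    (e : MonoidAlgebra F G ≃ₐ[F] ∀ k, Matrix (n k) (n k) F) :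
    Fintype.card G = ∑ k, Fintype.card (n k) ^ 2 := by
  rw [← Module.finrank_eq_card_basis (MonoidAlgebra.basis G F), e.toLinearEquiv.finrank_eq,
    Module.finrank_pi_fintype]
  simp only [Module.finrank_matrix, Module.finrank_self, mul_one, sq]

theorem tensorRank_groupTensor_le_sum_card_pow [DecidableEq G] [Fintype ι]
    (e : MonoidAlgebra F G ≃ₐ[F] ∀ k, Matrix (n k) (n k) F) (m : ℕ) :
    tensorRank F (groupTensor F G (m + 1)) ≤ ∑ k, Fintype.card (n k) ^ (m + 1) := by
  refine IsSumOfSimpleTensors.tensorRank_le ?_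
  simpa [funext groupTensor_eq_coord_prod, map_list_prod, List.map_ofFn, Function.comp_def] using
    isSumOfSimpleTensors_linearMap_prod_pi_matrix
      ((MonoidAlgebra.basis G F).coord 1 ∘ₗ e.symm.toLinearMap)
      fun (_ : Fin (m + 1)) g => e (MonoidAlgebra.of F G g)

theorem tensorRank_groupTensor_le_card_rpow [Fintype G] [DecidableEq G] [Finite ι]
    (e : MonoidAlgebra F G ≃ₐ[F] ∀ k, Matrix (n k) (n k) F) {d : ℕ} (hd : 2 ≤ d) :
    (tensorRank F (groupTensor F G d) : ℝ) ≤ (Fintype.card G : ℝ) ^ ((d : ℝ) / 2) := by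
  have := Fintype.ofFinite ι
  obtain ⟨m, rfl⟩ := Nat.exists_eq_add_of_le' (one_le_two.trans hd)
  calc (tensorRank F (groupTensor F G (m + 1)) : ℝ)
      ≤ ∑ k, (Fintype.card (n k) : ℝ) ^ (m + 1) := by
        exact_mod_cast tensorRank_groupTensor_le_sum_card_pow e m
    _ ≤ (∑ k, (Fintype.card (n k) : ℝ) ^ 2) ^ (((m + 1 : ℕ) : ℝ) / 2) :=
        sum_pow_le_sum_sq_rpow _ hd fun k _ => Nat.cast_nonneg _
    _ = (Fintype.card G : ℝ) ^ (((m + 1 : ℕ) : ℝ) / 2) := by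
        rw [card_eq_sum_card_sq_of_algEquiv e]
        simp only [Nat.cast_sum, Nat.cast_pow]

end GroupAlgebra

theorem stmt7_general (F G : Type*) [Field F] [IsAlgClosed F] [Group G] [Fintype G]
    [DecidableEq G] [NeZero (Nat.card G : F)] (d : ℕ) (hd : 2 ≤ d) :
    (tensorRank F (groupTensor F G d) : ℝ) ≤ (Fintype.card G : ℝ) ^ ((d : ℝ) / 2) := by
  obtain ⟨_, _, -, ⟨e⟩⟩ :=
    IsSemisimpleRing.exists_algEquiv_pi_matrix_of_isAlgClosed F (MonoidAlgebra F G)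
  exact tensorRank_groupTensor_le_card_rpow e hd

/-- For any finite group `G` and `d ≥ 2`, the rank of the group tensor `T_G^d` over
the complex numbers is at most `|G|^(d/2)`. -/
theorem stmt7 (G : Type*) [Group G] [Fintype G] [DecidableEq G] (d : ℕ) (hd : 2 ≤ d) :
    (tensorRank ℂ (groupTensor ℂ G d) : ℝ) ≤ (Fintype.card G : ℝ) ^ ((d : ℝ) / 2) :=
  stmt7_general ℂ G d hd
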